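/- Let f=(m,n,k) be an integer binary quadratic form with discriminant Δ=k²−4mn>0 not a perfect square. The period Γ(f) is bipalindromic if and only if the class of f is k-symmetric, i.e., f is SL(2,ℤ)-equivalent to its conjugate (m,n,−k) but not to its adjoint (−n,−m,k). -/

import Mathlib

/-- Iterates of the Gauss map starting from `ξ`. -/
noncomputable def gaussIter (ξ : ℝ) : ℕ → ℝ
  | 0 => ξ
  | n + 1 => 1 / (gaussIter ξ n - (⌊gaussIter ξ n⌋ : ℝ))

/-- The `n`-th partial quotient of the regular continued fraction expansion of `ξ`. -/
noncomputable def cfTerm (ξ : ℝ) (n : ℕ) : ℤ := ⌊gaussIter ξ n⌋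

/-- The continued fraction expansion of `ξ` is periodic with period length `P` from index `N`. -/
def IsEventuallyPeriodicCF (ξ : ℝ) (N P : ℕ) : Prop :=
  1 ≤ P ∧ ∀ j : ℕ, cfTerm ξ (N + j + P) = cfTerm ξ (N + j)

/-- `s` is the (minimal) period of the eventually periodic regular continued fraction
expansion of `ξ`; it is well defined up to cyclic permutation. -/
def IsCFPeriod (s : List ℤ) (ξ : ℝ) : Prop :=
  s ≠ [] ∧
  (∃ N : ℕ, ∀ j : ℕ, cfTerm ξ (N + j) = s.getD (j % s.length) 0) ∧
  (∀ P : ℕ, 1 ≤ P → (∃ N : ℕ, IsEventuallyPeriodicCF ξ N P) → s.length ≤ P)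

/-- The value of the binary quadratic form `f = (m, n, k)`, i.e. `m*x^2 + n*y^2 + k*x*y`. -/
def qval (f : ℤ × ℤ × ℤ) (x y : ℤ) : ℤ := f.1 * x ^ 2 + f.2.1 * y ^ 2 + f.2.2 * x * y

/-- The discriminant `k^2 - 4*m*n` of the form `f = (m, n, k)`. -/
def formDisc (f : ℤ × ℤ × ℤ) : ℤ := f.2.2 ^ 2 - 4 * f.1 * f.2.1

/-- `SL(2,ℤ)`-equivalence of binary quadratic forms. -/
def SLEquiv (f g : ℤ × ℤ × ℤ) : Prop :=
  ∃ a b c d : ℤ, a * d - b * c = 1 ∧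
    ∀ x y : ℤ, qval g x y = qval f (a * x + b * y) (c * x + d * y)

/-- The root with the plus sign of `m*ξ^2 + k*ξ + n = 0`, for `f = (m, n, k)`. -/
noncomputable def xiPlus (f : ℤ × ℤ × ℤ) : ℝ :=
  (-(f.2.2 : ℝ) + Real.sqrt ((formDisc f : ℤ) : ℝ)) / (2 * (f.1 : ℝ))

/-- The root with the minus sign of `m*ξ^2 + k*ξ + n = 0`, for `f = (m, n, k)`. -/
noncomputable def xiMinus (f : ℤ × ℤ × ℤ) : ℝ :=
  (-(f.2.2 : ℝ) - Real.sqrt ((formDisc f : ℤ) : ℝ)) / (2 * (f.1 : ℝ))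

/-- The conjugate `(m, n, -k)` of the form `(m, n, k)`. -/
def conjF (f : ℤ × ℤ × ℤ) : ℤ × ℤ × ℤ := (f.1, f.2.1, -f.2.2)

/-- The adjoint `(-n, -m, k)` of the form `(m, n, k)`. -/
def adjF (f : ℤ × ℤ × ℤ) : ℤ × ℤ × ℤ := (-f.2.1, -f.1, f.2.2)

/-- The antipodal `(-n, -m, -k)` of the form `(m, n, k)`. -/
def antipF (f : ℤ × ℤ × ℤ) : ℤ × ℤ × ℤ := (-f.2.1, -f.1, -f.2.2)

/-- A form `(m, n, k)` is primitive if `gcd(m, n, k) = 1`. -/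
def IsPrimitiveForm (f : ℤ × ℤ × ℤ) : Prop := Int.gcd f.1 (Int.gcd f.2.1 f.2.2) = 1

/-- A finite sequence is palindromic if some cyclic permutation of it equals its reversal. -/
def Palindromic (s : List ℤ) : Prop := ∃ t : List ℤ, List.IsRotated s t ∧ t.reverse = t

/-- A finite sequence is bipalindromic if some cyclic permutation of it is the concatenation
of two palindrome blocks each of odd length. -/
def Bipalindromic (s : List ℤ) : Prop :=
  ∃ u v : List ℤ, List.IsRotated s (u ++ v) ∧ Odd u.length ∧ Odd v.length ∧
    u.reverse = u ∧ v.reverse = v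

/-!
A form of given discriminant is determined by its root `ξ = ξ⁺(f)`, which transforms equivariantly
under `SL(2,ℤ)`. The root of the conjugate form is `-η` and that of the adjoint form is `-1/η`,
where `η` is the Galois conjugate of `ξ`, so `f` is equivalent to its conjugate (resp. its adjoint)
if and only if `ξ` and `η` are related by an integral Möbius transformation of determinant `-1`
(resp. `1`).

By Serret's theorem such a relation means that the continued fractions of `ξ` and `-1/η` have a
common tail, the parity of the index shift recording the determinant. By Galois' theorem `-1/η` has
the period of `ξ` read backwards. Hence the bi-infinite repetition `a` of the period satisfies
`a (c - i) = a i`, with `c` even for the conjugate form and `c` odd for the adjoint form.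

The possible `c` form a coset of `pℤ`, where `p` is the length of the period, so an even but no odd
one exists if and only if there is an even one and `p` is even. Rotating the period by `c / 2`
brings it into the form `b :: v` with `v` a palindrome, and `v` has odd length when `p` is even.
-/

open Function (Periodic)

/-! ### Integral Möbius transformations and the Gauss map -/

/-- `x` is the image of `y` under a fractional linear transformation with integer coefficients and
determinant `e = ±1`. The denominator is cleared, so at a pole of the transformation the relation
is not the usual one; this never happens for irrational `y`. -/
def MoebiusRel {R : Type*} [CommRing R] (e : ℤˣ) (x y : R) : Prop :=
  ∃ a b c d : ℤ, a * d - b * c = e ∧ x * (c * y + d) = a * y + b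

section MoebiusRel

variable {R : Type*} [CommRing R] {x y z : R} {e e' : ℤˣ}

theorem moebiusRel_refl (x : R) : MoebiusRel 1 x x :=
  ⟨1, 0, 0, 1, by norm_num, by push_cast; ring⟩

theorem moebiusRel_neg (x : R) : MoebiusRel (-1) (-x) x :=
  ⟨-1, 0, 0, 1, by norm_num, by push_cast; ring⟩

theorem MoebiusRel.symm (h : MoebiusRel e x y) : MoebiusRel e y x := by
  obtain ⟨a, b, c, d, hdet, hxy⟩ := h
  exact ⟨-d, b, c, -a, by linarith, by push_cast; linear_combination hxy⟩

theorem MoebiusRel.trans (hxy : MoebiusRel e x y) (hyz : MoebiusRel e' y z) :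
    MoebiusRel (e * e') x z := by
  obtain ⟨a, b, c, d, hdet, hxy⟩ := hxy
  obtain ⟨a', b', c', d', hdet', hyz⟩ := hyz
  refine ⟨a * a' + b * c', a * b' + b * d', c * a' + d * c', c * b' + d * d', ?_, ?_⟩
  · rw [Units.val_mul, ← hdet, ← hdet']; ring
  · push_cast
    linear_combination (c' * z + d') * hxy + (a - x * c) * hyz

theorem MoebiusRel.congr_right (hyz : MoebiusRel e' y z) :
    MoebiusRel e x y ↔ MoebiusRel (e * e') x z := by
  refine ⟨fun h => h.trans hyz, fun h => ?_⟩
  simpa [mul_assoc] using h.trans hyz.symm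

theorem MoebiusRel.congr_left (hxz : MoebiusRel e' x z) :
    MoebiusRel e x y ↔ MoebiusRel (e' * e) z y :=
  ⟨fun h => hxz.symm.trans h, fun h => by simpa [← mul_assoc] using hxz.trans h⟩

variable {K : Type*} [Field K]

theorem moebiusRel_inv_sub_intCast {x : K} {a : ℤ} (hx : x - a ≠ 0) :
    MoebiusRel (-1) x (x - a)⁻¹ :=
  ⟨a, 1, 1, 0, by norm_num, by push_cast; field_simp; ring⟩

theorem moebiusRel_neg_inv {x : K} (hx : x ≠ 0) : MoebiusRel 1 (-x⁻¹) x :=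
  ⟨0, -1, 1, 0, by norm_num, by push_cast; field_simp; ring⟩

end MoebiusRel

theorem gaussIter_add (x : ℝ) (n m : ℕ) :
    gaussIter x (n + m) = gaussIter (gaussIter x n) m := by
  induction m with
  | zero => rfl
  | succ m ih => rw [← add_assoc, gaussIter, gaussIter, ih]

theorem gaussIter_succ (x : ℝ) (n : ℕ) :
    gaussIter x (n + 1) = (Int.fract (gaussIter x n))⁻¹ :=
  one_div _

theorem gaussIter_one (x : ℝ) : gaussIter x 1 = (Int.fract x)⁻¹ :=
  gaussIter_succ x 0

theorem cfTerm_gaussIter (x : ℝ) (n m : ℕ) :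
    cfTerm (gaussIter x n) m = cfTerm x (n + m) := by
  rw [cfTerm, cfTerm, gaussIter_add]

theorem gaussIter_eq_cfTerm_add_inv (x : ℝ) (n : ℕ) :
    gaussIter x n = cfTerm x n + (gaussIter x (n + 1))⁻¹ := by
  rw [gaussIter_succ, inv_inv, cfTerm, Int.floor_add_fract]

theorem fract_pos_of_irrational {x : ℝ} (hx : Irrational x) : 0 < Int.fract x :=
  Int.fract_pos.mpr (hx.ne_int _)

theorem irrational_gaussIter {x : ℝ} (hx : Irrational x) (n : ℕ) :
    Irrational (gaussIter x n) := by
  induction n with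
  | zero => exact hx
  | succ n ih => rw [gaussIter_succ]; exact (ih.sub_intCast _).inv

theorem one_lt_gaussIter_succ {x : ℝ} (hx : Irrational x) (n : ℕ) :
    1 < gaussIter x (n + 1) := by
  rw [gaussIter_succ]
  exact (one_lt_inv₀ (fract_pos_of_irrational (irrational_gaussIter hx n))).mpr (Int.fract_lt_one _)

theorem moebiusRel_gaussIter {x : ℝ} (hx : Irrational x) (n : ℕ) :
    MoebiusRel ((-1) ^ n) x (gaussIter x n) := by
  induction n with
  | zero => exact moebiusRel_refl x
  | succ n ih =>
    rw [pow_succ, gaussIter_succ]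
    exact ih.trans
      (moebiusRel_inv_sub_intCast ((irrational_gaussIter hx n).sub_intCast _).ne_zero)

open GenContFract in
theorem intFractPair_stream_eq_gaussIter {x : ℝ} (hx : Irrational x) (n : ℕ) :
    IntFractPair.stream x n = some (IntFractPair.of (gaussIter x n)) := by
  induction n with
  | zero => rfl
  | succ n ih =>
    have hfract : (IntFractPair.of (gaussIter x n)).fr ≠ 0 :=
      (fract_pos_of_irrational (irrational_gaussIter hx n)).ne'
    rw [IntFractPair.stream_succ_of_some ih hfract, gaussIter_succ]
    rfl

theorem cfTerm_injOn_irrational : Set.InjOn cfTerm {x | Irrational x} := by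
  intro x hx y hy hxy
  have same_cf : GenContFract.of x = GenContFract.of y := by
    ext1
    · simpa [GenContFract.of_h_eq_floor, cfTerm, gaussIter] using congrFun hxy 0
    · ext1 n
      rw [GenContFract.get?_of_eq_some_of_succ_get?_intFractPair_stream
          (intFractPair_stream_eq_gaussIter hx (n + 1)),
        GenContFract.get?_of_eq_some_of_succ_get?_intFractPair_stream
          (intFractPair_stream_eq_gaussIter hy (n + 1))]
      exact congrArg (fun t : ℤ => some (GenContFract.Pair.mk 1 (t : ℝ))) (congrFun hxy (n + 1))
  exact tendsto_nhds_unique (GenContFract.of_convergence x)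
    (same_cf ▸ GenContFract.of_convergence y)

/-! ### Serret's theorem -/

/-- The continued fractions of `x` and `y` have a common tail, the numbers of removed terms having
sum even if `e = 1` and odd if `e = -1`. -/
def TailRel (e : ℤˣ) (x y : ℝ) : Prop :=
  ∃ N M : ℕ, (-1) ^ (N + M) = e ∧ gaussIter x N = gaussIter y M

section TailRel

variable {x y z : ℝ} {e e' : ℤˣ}

theorem TailRel.symm (h : TailRel e x y) : TailRel e y x := by
  obtain ⟨N, M, hparity, htail⟩ := h
  exact ⟨M, N, by rwa [add_comm], htail.symm⟩

theorem TailRel.trans (hxy : TailRel e x y) (hyz : TailRel e' y z) :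
    TailRel (e * e') x z := by
  obtain ⟨N, M, rfl, hxy⟩ := hxy
  obtain ⟨N', M', rfl, hyz⟩ := hyz
  refine ⟨N + N', M' + M, by rw [← pow_add]; congr 1; ring, ?_⟩
  rw [gaussIter_add, hxy, ← gaussIter_add, add_comm M, gaussIter_add y, hyz, ← gaussIter_add]

theorem tailRel_add_intCast (x : ℝ) (n : ℤ) : TailRel 1 (x + n) x :=
  ⟨1, 1, by norm_num, by rw [gaussIter_one, gaussIter_one, Int.fract_add_intCast]⟩

theorem tailRel_sub_intCast (x : ℝ) (n : ℤ) : TailRel 1 (x - n) x := by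
  simpa [sub_eq_add_neg] using tailRel_add_intCast x (-n)

theorem tailRel_inv_of_pos (h : 0 < x) : TailRel (-1) x⁻¹ x := by
  have of_lt_one {t : ℝ} (h0 : 0 < t) (h1 : t < 1) : TailRel (-1) t⁻¹ t :=
    ⟨0, 1, by norm_num, by rw [gaussIter_one, Int.fract_eq_self.mpr ⟨h0.le, h1⟩, gaussIter]⟩
  rcases lt_trichotomy x 1 with hlt | rfl | hgt
  · exact of_lt_one h hlt
  · -- The expansion of `1` breaks off, and `1 / 0 = 0` makes `gaussIter 1 n = 0` for `n ≥ 1`.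
    exact ⟨1, 2, by norm_num, by simp [gaussIter]⟩
  · simpa using (of_lt_one (inv_pos.mpr h) (inv_lt_one_of_one_lt₀ hgt)).symm

-- Factors `x ↦ 1 - x` through translations and three inversions of positive numbers.
theorem tailRel_one_sub (h0 : 0 < x) (h1 : x < 1) : TailRel (-1) (1 - x) x := by
  have hx : 0 < 1 - x := sub_pos.mpr h1
  have inv_inv_sub : (x⁻¹ - 1)⁻¹ = (1 - x)⁻¹ - 1 := by field_simp; ring
  have from_one_sub : TailRel (-1) (1 - x) (x⁻¹ - 1)⁻¹ := by
    have := (tailRel_inv_of_pos hx).symm.trans (tailRel_sub_intCast (1 - x)⁻¹ 1).symm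
    simpa [inv_inv_sub] using this
  have inversion : TailRel (-1) (x⁻¹ - 1)⁻¹ (x⁻¹ - 1) :=
    tailRel_inv_of_pos (sub_pos.mpr ((one_lt_inv₀ h0).mpr h1))
  have to_self : TailRel (-1) (x⁻¹ - 1) x := by
    simpa using (tailRel_sub_intCast x⁻¹ 1).trans (tailRel_inv_of_pos h0)
  simpa using (from_one_sub.trans inversion).trans to_self

theorem tailRel_neg (hx : Irrational x) : TailRel (-1) (-x) x := by
  have translate : TailRel 1 (-x) (1 - Int.fract x) := by
    convert tailRel_add_intCast (1 - Int.fract x) (-1 - ⌊x⌋) using 1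
    push_cast [Int.fract]
    ring
  have reflect : TailRel (-1) (1 - Int.fract x) (Int.fract x) :=
    tailRel_one_sub (fract_pos_of_irrational hx) (Int.fract_lt_one x)
  simpa using (translate.trans reflect).trans (tailRel_sub_intCast x ⌊x⌋)

theorem tailRel_inv (hx : Irrational x) : TailRel (-1) x⁻¹ x := by
  rcases hx.ne_zero.lt_or_gt with hneg | hpos
  · have inv_neg : TailRel (-1) (-x)⁻¹ (-x) := tailRel_inv_of_pos (neg_pos.mpr hneg)
    have neg_inv : TailRel (-1) x⁻¹ (-x)⁻¹ := by simpa [inv_neg] using tailRel_neg hx.neg.inv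
    simpa using (neg_inv.trans inv_neg).trans (tailRel_neg hx)
  · exact tailRel_inv_of_pos hpos

theorem tailRel_of_affine (hy : Irrational y) {a b d : ℤ} (hdet : a * d = e)
    (hxy : x * d = a * y + b) : TailRel e x y := by
  have hdd : (d : ℝ) * d = 1 := by
    exact_mod_cast Int.isUnit_mul_self (isUnit_of_mul_isUnit_right (hdet ▸ e.isUnit))
  have had : (a : ℝ) * d = (e : ℤ) := by exact_mod_cast hdet
  have hx : x = (e : ℤ) * y + (b * d : ℤ) := by
    push_cast
    linear_combination d * hxy - x * hdd + y * had
  rcases Int.units_eq_one_or e with rfl | rfl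
  · simpa [hx] using tailRel_add_intCast y (b * d)
  · simpa [hx] using (tailRel_add_intCast (-y) (b * d)).trans (tailRel_neg hy)

/-- Euclid's algorithm on the first column `(a, c)` of the matrix. -/
theorem MoebiusRel.tailRel (hx : Irrational x) (hy : Irrational y) (h : MoebiusRel e x y) :
    TailRel e x y := by
  obtain ⟨a, b, c, d, hdet, hxy⟩ := h
  induction hk : c.natAbs using Nat.strong_induction_on generalizing a b c d e x with
  | h k ih =>
    rcases eq_or_ne c 0 with rfl | hc
    · exact tailRel_of_affine hy (by simpa using hdet) (by simpa using hxy)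
    have hdiv : c * (a / c) + a % c = a := Int.mul_ediv_add_emod a c
    have hdivR : (c : ℝ) * (a / c : ℤ) + (a % c : ℤ) = a := by exact_mod_cast hdiv
    have hlt : (a % c).natAbs < k := by
      have hnonneg := Int.emod_nonneg a hc
      have hlt := Int.emod_lt_abs a hc
      rw [Int.abs_eq_natAbs] at hlt
      omega
    have hsub : Irrational (x - (a / c : ℤ)) := hx.sub_intCast _
    have reduced : TailRel (-e) (x - (a / c : ℤ))⁻¹ y := by
      refine ih _ hlt hsub.inv c d (a % c) (b - a / c * d) ?_ ?_ rfl
      · push_cast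
        linear_combination (-1) * hdet - d * hdiv
      · have := hsub.ne_zero
        push_cast
        field_simp
        linear_combination (-1) * hxy + y * hdivR
    have quotient_step : TailRel (-1) x (x - (a / c : ℤ))⁻¹ := by
      simpa using (tailRel_sub_intCast x _).symm.trans (tailRel_inv hsub).symm
    simpa using quotient_step.trans reduced

theorem TailRel.moebiusRel (hx : Irrational x) (hy : Irrational y) (h : TailRel e x y) :
    MoebiusRel e x y := by
  obtain ⟨N, M, rfl, htail⟩ := h
  rw [pow_add]
  exact (htail ▸ moebiusRel_gaussIter hx N).trans (moebiusRel_gaussIter hy M).symm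

theorem moebiusRel_iff_tailRel (hx : Irrational x) (hy : Irrational y) :
    MoebiusRel e x y ↔ TailRel e x y :=
  ⟨MoebiusRel.tailRel hx hy, TailRel.moebiusRel hx hy⟩

end TailRel

/-! ### Conjugate quadratic irrationals -/

/-- `x` is a real quadratic irrational and `x'` is its Galois conjugate: `x` is irrational and both
are the roots of a monic quadratic polynomial over `ℚ`, given by their sum `s` and product `q`. -/
def IsQuadConj (x x' : ℝ) : Prop :=
  Irrational x ∧ ∃ s q : ℚ, x + x' = s ∧ x * x' = q

namespace IsQuadConj

variable {x x' x'' : ℝ}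

theorem irrational_left (h : IsQuadConj x x') : Irrational x := h.1

theorem symm (h : IsQuadConj x x') : IsQuadConj x' x := by
  obtain ⟨hx, s, q, hs, hq⟩ := h
  refine ⟨?_, s, q, by rwa [add_comm], by rwa [mul_comm]⟩
  rw [eq_sub_of_add_eq' hs]
  exact hx.ratCast_sub s

theorem irrational_right (h : IsQuadConj x x') : Irrational x' := h.symm.1

theorem ne (h : IsQuadConj x x') : x ≠ x' := by
  rintro rfl
  obtain ⟨hx, s, -, hs, -⟩ := h
  exact hx ⟨s / 2, by push_cast; linarith⟩

theorem unique (h : IsQuadConj x x') (h' : IsQuadConj x x'') : x' = x'' := by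
  obtain ⟨hx, s, q, hs, hq⟩ := h
  obtain ⟨-, s', q', hs', hq'⟩ := h'
  have hlin : ((s - s' : ℚ) : ℝ) * x = (q - q' : ℚ) := by
    push_cast
    rw [← hs, ← hs', ← hq, ← hq']
    ring
  have hss : s - s' = 0 := by
    by_contra hne
    exact hx.ratCast_mul hne ⟨_, hlin.symm⟩
  have : (s : ℝ) = s' := by exact_mod_cast sub_eq_zero.mp hss
  linarith

theorem intCast_add (h : IsQuadConj x x') (a : ℤ) : IsQuadConj (a + x) (a + x') := by
  obtain ⟨hx, s, q, hs, hq⟩ := h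
  refine ⟨hx.intCast_add a, 2 * a + s, a ^ 2 + a * s + q, ?_, ?_⟩
  · push_cast
    rw [← hs]
    ring
  · push_cast
    rw [← hs, ← hq]
    ring

theorem inv (h : IsQuadConj x x') : IsQuadConj x⁻¹ x'⁻¹ := by
  have hx0 := h.irrational_left.ne_zero
  have hx0' := h.irrational_right.ne_zero
  obtain ⟨hx, s, q, hs, hq⟩ := h
  refine ⟨hx.inv, s / q, q⁻¹, ?_, ?_⟩
  · push_cast
    rw [← hs, ← hq]
    field_simp
    ring
  · push_cast
    rw [← hq, mul_inv]

theorem exists_gaussIter (h : IsQuadConj x x') (n : ℕ) :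
    ∃ z, IsQuadConj (gaussIter x n) z ∧ MoebiusRel ((-1) ^ n) x' z := by
  induction n with
  | zero => exact ⟨x', h, moebiusRel_refl x'⟩
  | succ n ih =>
    obtain ⟨z, hz, hrel⟩ := ih
    refine ⟨(z - cfTerm x n)⁻¹, ?_, ?_⟩
    · rw [gaussIter_succ, Int.fract]
      simpa [cfTerm, neg_add_eq_sub] using (hz.intCast_add (-cfTerm x n)).inv
    · rw [pow_succ]
      exact hrel.trans
        (moebiusRel_inv_sub_intCast (hz.irrational_right.sub_intCast _).ne_zero)

end IsQuadConj

/-! ### Two-sided continued fractions and Galois' theorem -/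

theorem forall_int_of_periodic {P : ℤ → Prop} {p : ℕ} (hp : 0 < p) (hP : Periodic P p)
    (h : ∀ j : ℕ, j < p → P j) (i : ℤ) : P i := by
  have hpos : (0 : ℤ) < p := by exact_mod_cast hp
  obtain ⟨j, hj⟩ := Int.eq_ofNat_of_zero_le (Int.emod_nonneg i hpos.ne')
  have hlt := Int.emod_lt_of_pos i hpos
  have hi : P (i % p) = P i := by
    rw [Int.emod_def, mul_comm]
    exact hP.sub_int_mul_eq (i / p)
  rw [← hi, hj]
  exact h j (by omega)

/-- `ReflectsAbout a c` says that the bi-infinite sequence `a` is symmetric about `c / 2`. -/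
def ReflectsAbout {α : Type*} (a : ℤ → α) (c : ℤ) : Prop := ∀ i, a (c - i) = a i

/-- `X i` is the value `[a i; a (i + 1), …]` of the tails of the bi-infinite continued fraction
with partial quotients `a`. The irrationality of these values follows from the other two fields
and is recorded for convenience. -/
structure IsTwoSidedCF (a : ℤ → ℤ) (X : ℤ → ℝ) : Prop where
  irrational : ∀ i, Irrational (X i)
  one_lt : ∀ i, 1 < X i
  eq_add_inv : ∀ i, X i = a i + (X (i + 1))⁻¹

namespace IsTwoSidedCF

variable {a b : ℤ → ℤ} {X Y Z : ℤ → ℝ} {p : ℕ}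

theorem inv_mem_Ioo (hX : IsTwoSidedCF a X) (i : ℤ) : (X i)⁻¹ ∈ Set.Ioo (0 : ℝ) 1 :=
  ⟨inv_pos.mpr (zero_lt_one.trans (hX.one_lt i)), inv_lt_one_of_one_lt₀ (hX.one_lt i)⟩

theorem floor_eq (hX : IsTwoSidedCF a X) (i : ℤ) : ⌊X i⌋ = a i := by
  rw [Int.floor_eq_iff, hX.eq_add_inv i]
  constructor <;> linarith [(hX.inv_mem_Ioo (i + 1)).1, (hX.inv_mem_Ioo (i + 1)).2]

theorem one_le (hX : IsTwoSidedCF a X) (i : ℤ) : 1 ≤ a i := by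
  rw [← hX.floor_eq, Int.le_floor]
  exact_mod_cast (hX.one_lt i).le

theorem gaussIter_eq (hX : IsTwoSidedCF a X) (i : ℤ) (n : ℕ) :
    gaussIter (X i) n = X (i + n) := by
  induction n with
  | zero => simp [gaussIter]
  | succ n ih =>
    rw [gaussIter_succ, ih, Int.fract, hX.floor_eq]
    push_cast
    rw [inv_eq_iff_eq_inv, sub_eq_iff_eq_add', ← add_assoc]
    exact hX.eq_add_inv _

theorem cfTerm_eq (hX : IsTwoSidedCF a X) (i : ℤ) (n : ℕ) : cfTerm (X i) n = a (i + n) := by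
  rw [cfTerm, hX.gaussIter_eq, hX.floor_eq]

theorem apply_eq_apply_iff (hX : IsTwoSidedCF a X) (hY : IsTwoSidedCF b Y) {i j : ℤ} :
    X i = Y j ↔ ∀ n : ℕ, a (i + n) = b (j + n) := by
  rw [← cfTerm_injOn_irrational.eq_iff (hX.irrational i) (hY.irrational j), funext_iff]
  simp only [hX.cfTerm_eq, hY.cfTerm_eq]

theorem periodic (hX : IsTwoSidedCF a X) (ha : Periodic a p) : Periodic X p := by
  intro i
  rw [hX.apply_eq_apply_iff hX]
  intro n
  rw [add_right_comm, ha]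

theorem gaussIter_eq_gaussIter_iff_reflectsAbout (hX : IsTwoSidedCF a X)
    (hY : IsTwoSidedCF (fun i => a (-1 - i)) Y) (hp : 0 < p) (ha : Periodic a p) (N M : ℕ) :
    gaussIter (X 0) N = gaussIter (Y 0) M ↔ ReflectsAbout a (N - M - 1) := by
  rw [hX.gaussIter_eq, hY.gaussIter_eq, hX.apply_eq_apply_iff hY]
  refine ⟨fun h i => ?_, fun h n => ?_⟩
  · have hper : Periodic (fun t : ℤ => a (N + t) = a (-1 - M - t)) p := by
      intro t
      simp only [← add_assoc, ← sub_sub, ha _, ha.sub_eq _]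
    have := forall_int_of_periodic hp hper (fun n _ => ?_) (i - N)
    · rw [add_sub_cancel] at this
      rw [this]
      congr 1
      ring
    · convert h n using 2 <;> ring
  · rw [← h]
    congr 1
    ring

theorem tailRel_iff_exists_reflectsAbout (hX : IsTwoSidedCF a X)
    (hY : IsTwoSidedCF (fun i => a (-1 - i)) Y) (hp : 0 < p) (ha : Periodic a p) {e : ℤˣ} :
    TailRel e (X 0) (Y 0) ↔ ∃ c : ℤ, c.negOnePow = -e ∧ ReflectsAbout a c := by
  have parity (N M : ℕ) : (-1) ^ (N + M) = e ↔ ((N : ℤ) - M - 1).negOnePow = -e := by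
    rw [Int.negOnePow_sub, Int.negOnePow_sub, Int.negOnePow_one, mul_neg_one, neg_inj, pow_add]
    rfl
  simp only [TailRel, parity, hX.gaussIter_eq_gaussIter_iff_reflectsAbout hY hp ha]
  refine ⟨fun ⟨N, M, h⟩ => ⟨_, h⟩, fun ⟨c, h⟩ => ⟨(c + 1).toNat, (-(c + 1)).toNat, ?_⟩⟩
  rwa [show ((c + 1).toNat : ℤ) - (-(c + 1)).toNat - 1 = c by omega]

section Conjugate

variable (hX : IsTwoSidedCF a X) (hZ : ∀ i, IsQuadConj (X i) (Z i))

include hX hZ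

theorem conj_eq_add_inv (i : ℤ) : Z i = a i + (Z (i + 1))⁻¹ := by
  have h := (hZ (i + 1)).inv.intCast_add (a i)
  rw [← hX.eq_add_inv] at h
  exact (hZ i).unique h

theorem conj_periodic (ha : Periodic a p) : Periodic Z p := fun i =>
  (hZ (i + p)).unique ((hX.periodic ha i).symm ▸ hZ i)

/-- Otherwise the conjugates would have the same continued fraction as the `X i`. -/
theorem exists_conj_neg : ∃ i, Z i < 0 := by
  by_contra! hnonneg
  have hpos (i : ℤ) : 0 < Z i := (hnonneg i).lt_of_ne' (hZ i).irrational_right.ne_zero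
  have ha (i : ℤ) : (1 : ℝ) ≤ a i := by exact_mod_cast hX.one_le i
  have hZcf : IsTwoSidedCF a Z :=
    { irrational := fun i => (hZ i).irrational_right
      one_lt := fun i => by
        rw [hX.conj_eq_add_inv hZ i]
        linarith [ha i, inv_pos.mpr (hpos (i + 1))]
      eq_add_inv := hX.conj_eq_add_inv hZ }
  exact (hZ 0).ne ((hX.apply_eq_apply_iff hZcf).mpr fun _ => rfl)

theorem conj_succ_mem_Ioo {i : ℤ} (hi : Z i < 0) : Z (i + 1) ∈ Set.Ioo (-1 : ℝ) 0 := by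
  have ha : (1 : ℝ) ≤ a i := by exact_mod_cast hX.one_le i
  have hinv : (Z (i + 1))⁻¹ < -1 := by linarith [hX.conj_eq_add_inv hZ i]
  have hneg : Z (i + 1) < 0 := inv_lt_zero.mp (by linarith)
  refine ⟨?_, hneg⟩
  simpa using (inv_lt_inv_of_neg (by norm_num) (inv_lt_zero.mpr hneg)).mpr hinv

theorem conj_mem_Ioo (hp : 0 < p) (ha : Periodic a p) (i : ℤ) : Z i ∈ Set.Ioo (-1 : ℝ) 0 := by
  obtain ⟨i₀, hi₀⟩ := hX.exists_conj_neg hZ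
  have from_i₀ (n : ℕ) : Z (i₀ + 1 + n) ∈ Set.Ioo (-1 : ℝ) 0 := by
    induction n with
    | zero => simpa using hX.conj_succ_mem_Ioo hZ hi₀
    | succ n ih => simpa [add_assoc] using hX.conj_succ_mem_Ioo hZ ih.2
  have hper : Periodic (fun t => Z (i₀ + 1 + t) ∈ Set.Ioo (-1 : ℝ) 0) p := fun t => by
    simp only [← add_assoc, hX.conj_periodic hZ ha _]
  simpa using forall_int_of_periodic hp hper (fun n _ => from_i₀ n) (i - (i₀ + 1))

theorem conj_reverse (hp : 0 < p) (ha : Periodic a p) :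
    IsTwoSidedCF (fun i => a (-1 - i)) (fun i => -(Z (-i))⁻¹) where
  irrational i := (hZ (-i)).irrational_right.inv.neg
  one_lt i := by
    obtain ⟨hgt, hneg⟩ := hX.conj_mem_Ioo hZ hp ha (-i)
    have := (inv_lt_inv_of_neg hneg (by norm_num)).mpr hgt
    rw [inv_neg, inv_one] at this
    linarith
  eq_add_inv i := by
    have h := hX.conj_eq_add_inv hZ (-1 - i)
    rw [show -1 - i + 1 = -i by ring] at h
    rw [inv_neg, inv_inv, show -(i + 1) = -1 - i by ring]
    linarith

end Conjugate

end IsTwoSidedCF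

theorem periodic_gaussIter_of_periodic_cfTerm {x : ℝ} (hx : Irrational x) {N p : ℕ}
    (h : Periodic (fun j => cfTerm x (N + j)) p) : Periodic (fun n => gaussIter x (N + n)) p := by
  intro n
  refine cfTerm_injOn_irrational (irrational_gaussIter hx _) (irrational_gaussIter hx _)
    (funext fun j => ?_)
  rw [cfTerm_gaussIter, cfTerm_gaussIter, add_assoc, add_assoc N, add_right_comm n]
  exact h (n + j)

theorem exists_isTwoSidedCF_of_cfTerm_periodic {x : ℝ} (hx : Irrational x) {a : ℤ → ℤ} {N p : ℕ}
    (hp : 0 < p) (ha : Periodic a p) (hcf : ∀ j : ℕ, cfTerm x (N + j) = a j) :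
    ∃ X, IsTwoSidedCF a X ∧ ∀ i, ∃ n, gaussIter x n = X i := by
  -- Dropping a further period makes the index positive, hence the complete quotients exceed `1`.
  have hcf_shift (n : ℕ) : cfTerm x (N + p + n) = a n := by
    rw [add_assoc, hcf, Nat.cast_add, add_comm, ha]
  have hcf_periodic : Periodic (fun j => cfTerm x (N + p + j)) p := fun j => by
    simp only [hcf_shift, Nat.cast_add, ha _]
  have gaussIter_periodic := periodic_gaussIter_of_periodic_cfTerm hx hcf_periodic
  let X : ℤ → ℝ := fun i => gaussIter x (N + p + (i % p).toNat)
  have X_natCast (n : ℕ) : X n = gaussIter x (N + p + n) := gaussIter_periodic.map_mod_nat n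
  have X_periodic : Periodic X p := fun i => by simp only [X, Int.add_emod_right]
  refine ⟨X, ⟨fun i => irrational_gaussIter hx _, fun i => ?_, fun i => ?_⟩, fun i => ⟨_, rfl⟩⟩
  · obtain ⟨n, hn⟩ : ∃ n, N + p + (i % p).toNat = n + 1 := Nat.exists_eq_add_of_le' (by omega)
    simp only [X, hn]
    exact one_lt_gaussIter_succ hx n
  · refine forall_int_of_periodic (P := fun i => X i = a i + (X (i + 1))⁻¹) hp
      (fun i => ?_) (fun n _ => ?_) i
    · simp only [add_right_comm i _ 1, X_periodic _, ha _]
    · rw [← Nat.cast_succ, X_natCast, X_natCast, ← hcf_shift]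
      exact gaussIter_eq_cfTerm_add_inv x _

theorem moebiusRel_conj_iff_exists_reflectsAbout {x x' : ℝ} (hxx' : IsQuadConj x x') {a : ℤ → ℤ}
    {N p : ℕ} (hp : 0 < p) (ha : Periodic a p) (hcf : ∀ j : ℕ, cfTerm x (N + j) = a j) {e : ℤˣ} :
    MoebiusRel e x x' ↔ ∃ c : ℤ, c.negOnePow = -e ∧ ReflectsAbout a c := by
  have hx := hxx'.irrational_left
  obtain ⟨X, hX, X_mem⟩ := exists_isTwoSidedCF_of_cfTerm_periodic hx hp ha hcf
  have hZ (i : ℤ) : ∃ z, IsQuadConj (X i) z := by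
    obtain ⟨n, hn⟩ := X_mem i
    exact (hxx'.exists_gaussIter n).imp fun z hz => hn ▸ hz.1
  choose Z hZ using hZ
  have hY := hX.conj_reverse hZ hp ha
  have shift : MoebiusRel e x x' ↔ MoebiusRel e (X 0) (Z 0) := by
    obtain ⟨n, hn⟩ := X_mem 0
    obtain ⟨z, hz, hrel⟩ := hxx'.exists_gaussIter n
    have hzZ : z = Z 0 := (hn ▸ hz).unique (hZ 0)
    have hsq : (-1 : ℤˣ) ^ n * (-1) ^ n = 1 := Int.units_mul_self _
    rw [(moebiusRel_gaussIter hx n).congr_left, hrel.congr_right, hn, hzZ, mul_right_comm, hsq,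
      one_mul]
  have to_reverse : MoebiusRel e (X 0) (Z 0) ↔ MoebiusRel e (X 0) (-(Z (-0))⁻¹) := by
    rw [neg_zero, (moebiusRel_neg_inv (hZ 0).irrational_right.ne_zero).congr_right, mul_one]
  rw [shift, to_reverse, moebiusRel_iff_tailRel (hX.irrational 0) (hY.irrational 0)]
  exact hX.tailRel_iff_exists_reflectsAbout hY hp ha

/-! ### Cyclic words -/

namespace ReflectsAbout

variable {α : Type*} {a : ℤ → α} {c c' : ℤ}

theorem periodic_sub (h : ReflectsAbout a c) (h' : ReflectsAbout a c') : Periodic a (c' - c) :=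
  fun i => by rw [← h i, ← h', show c' - (i + (c' - c)) = c - i by ring]

theorem add_period {q : ℤ} (h : ReflectsAbout a c) (hq : Periodic a q) : ReflectsAbout a (c + q) :=
  fun i => by rw [add_sub_right_comm, hq, h]

end ReflectsAbout

theorem even_period_iff_forall_even {α : Type*} {a : ℤ → α} {c p : ℤ} (ha : Periodic a p)
    (hdvd : ∀ q, Periodic a q → p ∣ q) (hc : Even c) (h : ReflectsAbout a c) :
    Even p ↔ ∀ c', ReflectsAbout a c' → Even c' := by
  refine ⟨fun hp c' h' => ?_, fun heven => ?_⟩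
  · have hsub : Even (c' - c) := hp.trans_dvd (hdvd _ (h.periodic_sub h'))
    simpa using hsub.add hc
  · simpa using (heven _ (h.add_period ha)).sub hc

theorem minPeriod_dvd_of_periodic {α : Type*} {a : ℤ → α} {p : ℕ} (hp : 0 < p)
    (ha : Periodic a p) (hmin : ∀ P : ℕ, 0 < P → Periodic a P → p ≤ P) {q : ℤ}
    (hq : Periodic a q) : (p : ℤ) ∣ q := by
  have hpos : (0 : ℤ) < p := by exact_mod_cast hp
  have hmod : Periodic a (q % p) := by
    rw [Int.emod_def, mul_comm]
    exact hq.sub_period (ha.int_mul _)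
  obtain ⟨r, hr⟩ := Int.eq_ofNat_of_zero_le (Int.emod_nonneg q hpos.ne')
  have hlt := Int.emod_lt_of_pos q hpos
  rw [hr] at hmod
  refine Int.dvd_of_emod_eq_zero (by_contra fun hne => ?_)
  have := hmin r (by omega) hmod
  omega

/-- The bi-infinite periodic sequence obtained by repeating the word `s`. -/
def cyclicExt (s : List ℤ) (i : ℤ) : ℤ := s.getD (i % s.length).toNat 0

section cyclicExt

variable {s t : List ℤ}

theorem cyclicExt_natCast (s : List ℤ) (j : ℕ) : cyclicExt s j = s.getD (j % s.length) 0 := by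
  rw [cyclicExt, ← Int.natCast_mod, Int.toNat_natCast]

theorem cyclicExt_of_lt {j : ℕ} (hj : j < s.length) : cyclicExt s j = s[j] := by
  rw [cyclicExt_natCast, Nat.mod_eq_of_lt hj, List.getD_eq_getElem _ _ hj]

theorem cyclicExt_periodic (s : List ℤ) : Periodic (cyclicExt s) s.length := fun i => by
  rw [cyclicExt, cyclicExt, Int.add_emod_right]

theorem cyclicExt_rotate (hs : s ≠ []) (r : ℕ) (i : ℤ) :
    cyclicExt (s.rotate r) i = cyclicExt s (i + r) := by
  have hlen : 0 < s.length := List.length_pos_of_ne_nil hs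
  have hper : Periodic (fun i => cyclicExt (s.rotate r) i = cyclicExt s (i + r)) s.length := by
    intro i
    have hrot := cyclicExt_periodic (s.rotate r) i
    rw [List.length_rotate] at hrot
    simp only [hrot, add_right_comm i, cyclicExt_periodic s _]
  refine forall_int_of_periodic hlen hper (fun j hj => ?_) i
  rw [cyclicExt_of_lt (by rwa [List.length_rotate]), List.getElem_rotate, ← Nat.cast_add,
    cyclicExt_natCast, List.getD_eq_getElem _ _ (Nat.mod_lt _ hlen)]

theorem cyclicExt_reverse (hs : s ≠ []) (i : ℤ) :
    cyclicExt s.reverse i = cyclicExt s (-1 - i) := by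
  have hper : Periodic (fun i => cyclicExt s.reverse i = cyclicExt s (-1 - i)) s.length := by
    intro i
    have hrev := cyclicExt_periodic s.reverse i
    rw [List.length_reverse] at hrev
    simp only [hrev, ← sub_sub, (cyclicExt_periodic s).sub_eq _]
  refine forall_int_of_periodic (List.length_pos_of_ne_nil hs) hper (fun j hj => ?_) i
  have hidx : (-1 - j + s.length : ℤ) = (s.length - 1 - j : ℕ) := by omega
  rw [cyclicExt_of_lt (by rwa [List.length_reverse]), List.getElem_reverse,
    ← cyclicExt_periodic s, hidx, cyclicExt_of_lt]

theorem eq_of_cyclicExt_eq (hlen : s.length = t.length) (h : ∀ i, cyclicExt s i = cyclicExt t i) :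
    s = t :=
  List.ext_getElem hlen fun j hs ht => by rw [← cyclicExt_of_lt hs, h, cyclicExt_of_lt ht]

theorem reflectsAbout_cyclicExt_rotate (hs : s ≠ []) (r : ℕ) (c : ℤ) :
    ReflectsAbout (cyclicExt (s.rotate r)) c ↔ ReflectsAbout (cyclicExt s) (c + 2 * r) := by
  simp only [ReflectsAbout, cyclicExt_rotate hs]
  refine ⟨fun h i => ?_, fun h i => ?_⟩
  · convert h (i - r) using 2 <;> ring
  · convert h (i + r) using 2
    ring

theorem reflectsAbout_cyclicExt_append {u v : List ℤ} (hne : u ++ v ≠ [])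
    (hu : u.reverse = u) (hv : v.reverse = v) :
    ReflectsAbout (cyclicExt (u ++ v)) (u.length - 1) := by
  have hrot : (u ++ v).reverse = (u ++ v).rotate u.length := by
    rw [List.reverse_append, hu, hv, List.rotate_append_length_eq]
  intro i
  have h := cyclicExt_reverse hne (-1 - i)
  rw [hrot, cyclicExt_rotate hne, sub_sub_cancel] at h
  rw [← h]
  congr 1
  ring

theorem reverse_eq_of_reflectsAbout_zero {b : ℤ} {v : List ℤ}
    (h : ReflectsAbout (cyclicExt (b :: v)) 0) : v.reverse = v := by
  have hne : b :: v ≠ [] := List.cons_ne_nil b v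
  have hrot : (b :: v).reverse = (b :: v).rotate 1 := by
    refine eq_of_cyclicExt_eq (by simp) fun i => ?_
    rw [cyclicExt_reverse hne, cyclicExt_rotate hne, ← h]
    congr 1
    push_cast
    ring
  simpa using hrot

theorem bipalindromic_iff (hs : s ≠ []) :
    Bipalindromic s ↔ Even s.length ∧ ∃ c, Even c ∧ ReflectsAbout (cyclicExt s) c := by
  have length_rotate (r : ℕ) : (s.rotate r).length = s.length := List.length_rotate ..
  have rotate_ne_nil (r : ℕ) : s.rotate r ≠ [] := mt List.rotate_eq_nil_iff.mp hs
  constructor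
  · rintro ⟨u, v, ⟨r, hr⟩, hu_odd, hv_odd, hu, hv⟩
    refine ⟨?_, u.length - 1 + 2 * r, ?_, ?_⟩
    · rw [← length_rotate r, hr, List.length_append]
      exact hu_odd.add_odd hv_odd
    · have : Odd (u.length : ℤ) := by exact_mod_cast hu_odd
      exact (this.sub_odd odd_one).add (even_two_mul _)
    · rw [← reflectsAbout_cyclicExt_rotate hs, hr]
      exact reflectsAbout_cyclicExt_append (hr ▸ rotate_ne_nil r) hu hv
  · rintro ⟨heven, _, ⟨c, rfl⟩, h⟩
    obtain ⟨r, hr⟩ : ∃ r : ℕ, (r : ℤ) = c % s.length :=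
      ⟨_, Int.toNat_of_nonneg (Int.emod_nonneg c (by simpa using hs))⟩
    have centred : ReflectsAbout (cyclicExt (s.rotate r)) 0 := by
      rw [reflectsAbout_cyclicExt_rotate hs, hr, Int.emod_def]
      convert h.add_period ((cyclicExt_periodic s).int_mul (-2 * (c / s.length))) using 1
      push_cast
      ring
    obtain ⟨b, v, hbv⟩ := List.exists_cons_of_ne_nil (rotate_ne_nil r)
    refine ⟨[b], v, ⟨r, hbv⟩, odd_one, ?_, rfl, reverse_eq_of_reflectsAbout_zero (hbv ▸ centred)⟩
    rw [← length_rotate r, hbv, List.length_cons] at heven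
    exact Nat.not_even_iff_odd.mp (Nat.even_add_one.mp heven)

end cyclicExt

/-! ### Binary quadratic forms and their roots -/

/-- The form obtained from `f` by the substitution `(x, y) ↦ (a x + b y, c x + d y)`. -/
def formSubst (f : ℤ × ℤ × ℤ) (a b c d : ℤ) : ℤ × ℤ × ℤ :=
  (f.1 * a ^ 2 + f.2.1 * c ^ 2 + f.2.2 * a * c,
    f.1 * b ^ 2 + f.2.1 * d ^ 2 + f.2.2 * b * d,
    2 * f.1 * a * b + 2 * f.2.1 * c * d + f.2.2 * (a * d + b * c))

section Forms

variable {f g : ℤ × ℤ × ℤ}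

theorem qval_formSubst (f : ℤ × ℤ × ℤ) (a b c d x y : ℤ) :
    qval (formSubst f a b c d) x y = qval f (a * x + b * y) (c * x + d * y) := by
  simp only [qval, formSubst]
  ring

theorem qval_injective : Function.Injective qval := by
  intro f g h
  have hm := congrFun₂ h 1 0
  have hn := congrFun₂ h 0 1
  have hk := congrFun₂ h 1 1
  simp only [qval] at hm hn hk
  ext <;> linarith

theorem slEquiv_iff_exists_formSubst :
    SLEquiv f g ↔ ∃ a b c d : ℤ, a * d - b * c = 1 ∧ g = formSubst f a b c d := by
  simp only [SLEquiv, ← qval_injective.eq_iff, funext_iff, qval_formSubst]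

theorem formDisc_formSubst {a b c d : ℤ} (hdet : a * d - b * c = 1) :
    formDisc (formSubst f a b c d) = formDisc f := by
  simp only [formDisc, formSubst]
  linear_combination (f.2.2 ^ 2 - 4 * f.1 * f.2.1) * (a * d - b * c + 1) * hdet

theorem formDisc_conjF (f : ℤ × ℤ × ℤ) : formDisc (conjF f) = formDisc f := by
  simp only [formDisc, conjF]
  ring

theorem formDisc_adjF (f : ℤ × ℤ × ℤ) : formDisc (adjF f) = formDisc f := by
  simp only [formDisc, adjF]
  ring

theorem coeffs_ne_zero (hf : Irrational √(formDisc f : ℝ)) : f.1 ≠ 0 ∧ f.2.1 ≠ 0 := by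
  rw [← mul_ne_zero_iff]
  intro h
  have hdisc : formDisc f = f.2.2 ^ 2 := by
    rw [formDisc]
    linear_combination (-4) * h
  rw [hdisc, Int.cast_pow, Real.sqrt_sq_eq_abs, ← Int.cast_abs] at hf
  exact hf.ne_int _ rfl

theorem sq_sqrt_formDisc (hf : Irrational √(formDisc f : ℝ)) :
    √(formDisc f : ℝ) ^ 2 = f.2.2 ^ 2 - 4 * f.1 * f.2.1 := by
  rw [Real.sq_sqrt (Real.sqrt_ne_zero'.mp hf.ne_zero).le, formDisc]
  push_cast
  ring

theorem two_mul_fst_mul_xiPlus (hf : Irrational √(formDisc f : ℝ)) :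
    2 * f.1 * xiPlus f = √(formDisc f : ℝ) - f.2.2 := by
  have hm : (f.1 : ℝ) ≠ 0 := Int.cast_ne_zero.mpr (coeffs_ne_zero hf).1
  rw [xiPlus]
  field_simp
  ring

theorem isQuadConj_xi (hf : Irrational √(formDisc f : ℝ)) :
    IsQuadConj (xiPlus f) (xiMinus f) := by
  have hm : (f.1 : ℝ) ≠ 0 := Int.cast_ne_zero.mpr (coeffs_ne_zero hf).1
  refine ⟨?_, -f.2.2 / f.1, f.2.1 / f.1, ?_, ?_⟩
  · refine Irrational.of_intCast_mul (2 * f.1) ?_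
    push_cast
    rw [two_mul_fst_mul_xiPlus hf]
    exact hf.sub_intCast _
  · rw [xiPlus, xiMinus]
    push_cast
    field_simp
    ring
  · have hD := sq_sqrt_formDisc hf
    rw [xiPlus, xiMinus]
    push_cast
    field_simp
    linear_combination (-1) * hD

theorem xiPlus_conjF (f : ℤ × ℤ × ℤ) : xiPlus (conjF f) = -xiMinus f := by
  rw [xiPlus, xiMinus, formDisc_conjF, conjF]
  push_cast
  ring

theorem xiPlus_adjF (hf : Irrational √(formDisc f : ℝ)) : xiPlus (adjF f) = -(xiMinus f)⁻¹ := by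
  have hm : (f.1 : ℝ) ≠ 0 := Int.cast_ne_zero.mpr (coeffs_ne_zero hf).1
  have hn : (f.2.1 : ℝ) ≠ 0 := Int.cast_ne_zero.mpr (coeffs_ne_zero hf).2
  have hD := sq_sqrt_formDisc hf
  rw [neg_inv]
  refine eq_inv_of_mul_eq_one_left ?_
  rw [xiPlus, xiMinus, formDisc_adjF, adjF]
  push_cast
  field_simp
  linear_combination (-1) * hD

theorem eq_zero_of_intCast_mul_eq_intCast {x : ℝ} (hx : Irrational x) {c a : ℤ}
    (h : c * x = a) : c = 0 ∧ a = 0 := by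
  rcases eq_or_ne c 0 with rfl | hc
  · simpa [eq_comm] using h
  · exact absurd h ((hx.intCast_mul hc).ne_int a)

theorem eq_of_xiPlus_eq (hf : Irrational √(formDisc f : ℝ)) (hdisc : formDisc g = formDisc f)
    (hxi : xiPlus g = xiPlus f) : g = f := by
  have hroot := two_mul_fst_mul_xiPlus (hdisc ▸ hf)
  rw [hxi, hdisc] at hroot
  have hlin : ((2 * (g.1 - f.1) : ℤ) : ℝ) * xiPlus f = (f.2.2 - g.2.2 : ℤ) := by
    push_cast
    linear_combination hroot - two_mul_fst_mul_xiPlus hf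
  obtain ⟨hm, hk⟩ := eq_zero_of_intCast_mul_eq_intCast (isQuadConj_xi hf).irrational_left hlin
  have hm : g.1 = f.1 := by linarith
  have hk : g.2.2 = f.2.2 := by linarith
  have hn : g.2.1 = f.2.1 := by
    rw [formDisc, formDisc, hm, hk] at hdisc
    exact mul_left_cancel₀ (coeffs_ne_zero hf).1 (by linarith)
  exact Prod.ext hm (Prod.ext hn hk)

theorem xiPlus_formSubst (hf : Irrational √(formDisc f : ℝ)) {a b c d : ℤ}
    (hdet : a * d - b * c = 1) :
    xiPlus f * (c * xiPlus (formSubst f a b c d) + d) =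
      a * xiPlus (formSubst f a b c d) + b := by
  have hm : (f.1 : ℝ) ≠ 0 := Int.cast_ne_zero.mpr (coeffs_ne_zero hf).1
  have hg : Irrational √(formDisc (formSubst f a b c d) : ℝ) := by rwa [formDisc_formSubst hdet]
  have hm' : ((formSubst f a b c d).1 : ℝ) ≠ 0 := Int.cast_ne_zero.mpr (coeffs_ne_zero hg).1
  have hdetR : (a : ℝ) * d - b * c = 1 := by exact_mod_cast hdet
  have hD := sq_sqrt_formDisc hf
  rw [xiPlus, xiPlus, formDisc_formSubst hdet]
  generalize √(formDisc f : ℝ) = D at hD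
  field_simp
  simp only [formSubst]
  push_cast
  linear_combination c * hD +
    (D * (2 * f.1 * a + f.2.2 * c) - c * (f.2.2 ^ 2 - 4 * f.1 * f.2.1)) * hdetR

theorem slEquiv_iff_moebiusRel (hf : Irrational √(formDisc f : ℝ))
    (hdisc : formDisc g = formDisc f) : SLEquiv f g ↔ MoebiusRel 1 (xiPlus f) (xiPlus g) := by
  rw [slEquiv_iff_exists_formSubst]
  constructor
  · rintro ⟨a, b, c, d, hdet, rfl⟩
    exact ⟨a, b, c, d, hdet, xiPlus_formSubst hf hdet⟩
  · rintro ⟨a, b, c, d, hdet, hxi⟩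
    rw [Units.val_one] at hdet
    refine ⟨a, b, c, d, hdet, ?_⟩
    have hdisc' := formDisc_formSubst (f := f) hdet
    refine eq_of_xiPlus_eq (hdisc'.symm ▸ hf) (hdisc.trans hdisc'.symm) ?_
    have hden : (c : ℝ) * xiPlus f - a ≠ 0 := fun h => by
      obtain ⟨rfl, rfl⟩ := eq_zero_of_intCast_mul_eq_intCast (isQuadConj_xi hf).irrational_left
        (sub_eq_zero.mp h)
      simp at hdet
    exact mul_left_cancel₀ hden (by linear_combination hxi - xiPlus_formSubst hf hdet)

theorem slEquiv_conjF_iff (hf : Irrational √(formDisc f : ℝ)) :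
    SLEquiv f (conjF f) ↔ MoebiusRel (-1) (xiPlus f) (xiMinus f) := by
  rw [slEquiv_iff_moebiusRel hf (formDisc_conjF f), xiPlus_conjF,
    (moebiusRel_neg (xiMinus f)).congr_right, one_mul]

theorem slEquiv_adjF_iff (hf : Irrational √(formDisc f : ℝ)) :
    SLEquiv f (adjF f) ↔ MoebiusRel 1 (xiPlus f) (xiMinus f) := by
  rw [slEquiv_iff_moebiusRel hf (formDisc_adjF f), xiPlus_adjF hf,
    (moebiusRel_neg_inv (isQuadConj_xi hf).irrational_right.ne_zero).congr_right, one_mul]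

end Forms

/-- The period `Γ(m,n,k)` is bipalindromic iff the class `C(m,n,k)` is `k`-symmetric. -/
theorem statement6 (m n k : ℤ)
    (hpos : 0 < formDisc (m, n, k)) (hsq : ¬ IsSquare (formDisc (m, n, k))) :
    ∀ s : List ℤ, IsCFPeriod s (xiPlus (m, n, k)) →
      (Bipalindromic s ↔
        (SLEquiv (m, n, k) (conjF (m, n, k)) ∧ ¬ SLEquiv (m, n, k) (adjF (m, n, k)))) := by
  intro s ⟨hne, ⟨N, hN⟩, hmin⟩
  have hf : Irrational √(formDisc (m, n, k) : ℝ) := irrational_sqrt_intCast_iff.mpr ⟨hsq, hpos.le⟩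
  have hlen : 0 < s.length := List.length_pos_of_ne_nil hne
  have hper := cyclicExt_periodic s
  have hcf (j : ℕ) : cfTerm (xiPlus (m, n, k)) (N + j) = cyclicExt s j := by
    rw [hN, cyclicExt_natCast]
  have hdvd (q : ℤ) : Periodic (cyclicExt s) q → (s.length : ℤ) ∣ q :=
    minPeriod_dvd_of_periodic hlen hper fun P hP h =>
      hmin P hP ⟨N, hP, fun j => by rw [add_assoc, hcf, hcf, Nat.cast_add, h]⟩
  have reflection (e : ℤˣ) : MoebiusRel e (xiPlus (m, n, k)) (xiMinus (m, n, k)) ↔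
      ∃ c : ℤ, c.negOnePow = -e ∧ ReflectsAbout (cyclicExt s) c :=
    moebiusRel_conj_iff_exists_reflectsAbout (isQuadConj_xi hf) hlen hper hcf
  rw [slEquiv_conjF_iff hf, slEquiv_adjF_iff hf, reflection, reflection, bipalindromic_iff hne,
    neg_neg]
  simp only [Int.negOnePow_eq_one_iff, Int.negOnePow_eq_neg_one_iff, and_comm (b := ∃ _, _)]
  refine and_congr_right fun ⟨c, hc, h⟩ => ?_
  rw [← Int.even_coe_nat, even_period_iff_forall_even hper hdvd hc h]
  simp only [← Int.not_even_iff_odd, not_exists, not_and, not_imp_not]
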